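/- arXiv:1906.07281 — 2 statements merged into one kernel-verified Lean document; each statement's English description precedes it below -/
import Mathlib

section
/- There exists a compact convex set K ⊂ ℝ² with nonempty interior whose boundary is a C¹ curve with Lipschitz-continuous derivative (i.e., ∂K admits a C¹ unit-speed parametrization z with z' uniformly Lipschitz), together with a point x ∉ K and a nonzero vector w ∈ ℝ², such that the one-sided directional derivative lim_{t→0⁺} (Π(x + t w) − Π(x))/t of the metric projection Π onto K does not exist. -/
/-!
A strictly convex closed curve `γ` is determined by its tangent angle `θ` as a function of
arclength, and it is `C^{1,1}` exactly when `θ` is Lipschitz. Let `x` lie on the outer normal of `γ`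
at `s₀`, at distance `r > 0`, and move `x` along the direction tangent to `γ` at `s₀`. In the frame
at `s₀` write `γ(s) = (X(s), h(s))`. The outer normal at `γ(s)` meets the line through `x` at
parameter `t(s) = X(s) + (r - h(s)) tan (θ(s) - θ(s₀))`, so the point with parameter `t(s)` projects
to `γ(s)`. A one-sided derivative of the projection relates `X(s)` linearly to `t(s)` up to first
order, which makes `t` differentiable from the right at `s₀`; since `X` and `h` are differentiable,
solving for `θ` makes it differentiable from the right too. Hence any Lipschitz tangent angle
without a right derivative gives a counterexample, for instance
`θ(s) = s + |sin s| sin (log |sin s|) / 4` at `s₀ = 0`.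
-/

open Real Set Filter Topology Asymptotics MeasureTheory
open scoped RealInnerProductSpace NNReal

namespace TangentAngle

section General

theorem eq_of_dist_eq_infDist_of_inner_nonpos {F : Type*} [NormedAddCommGroup F]
    [InnerProductSpace ℝ F] {K : Set F} {q p y : F} (hp : p ∈ K)
    (hdist : dist q y = Metric.infDist q K) (hinner : ⟪q - p, y - p⟫ ≤ 0) : y = p := by
  have hle : ‖q - y‖ ≤ ‖q - p‖ := by
    simpa only [← dist_eq_norm, hdist] using Metric.infDist_le_dist_of_mem hp
  have hexpand := norm_sub_sq_real (q - p) (y - p)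
  rw [sub_sub_sub_cancel_right] at hexpand
  have hnorm : ‖y - p‖ ^ 2 = 0 := by nlinarith [sq_nonneg ‖y - p‖, norm_nonneg (q - y)]
  rwa [sq_eq_zero_iff, norm_eq_zero, sub_eq_zero] at hnorm

theorem periodic_eq_of_tendsto_atBot {β : Type*} [TopologicalSpace β] [T2Space β] {f : ℝ → β}
    {c : ℝ} {b : β} (hf : Function.Periodic f c) (hc : 0 < c) (hlim : Tendsto f atBot (𝓝 b))
    (x : ℝ) : f x = b := by
  have hshift : Tendsto (fun n : ℕ => x - n * c) atTop atBot :=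
    tendsto_atBot_add_const_left _ _ <|
      tendsto_neg_atTop_atBot.comp (tendsto_natCast_atTop_atTop.atTop_mul_const hc)
  refine tendsto_nhds_unique (tendsto_const_nhds.congr fun n => ?_) (hlim.comp hshift)
  exact (hf.sub_nat_mul_eq n).symm

theorem strictMono_id_add_of_lipschitzWith {g : ℝ → ℝ} {C : ℝ≥0} (hg : LipschitzWith C g)
    (hC : C < 1) : StrictMono fun s => s + g s := by
  intro s u hsu
  have hdist := hg.dist_le_mul s u
  rw [dist_comm s u, Real.dist_eq, Real.dist_eq, abs_of_pos (sub_pos.2 hsu)] at hdist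
  have hlt : (C : ℝ) * (u - s) < u - s :=
    mul_lt_of_lt_one_left (sub_pos.2 hsu) (by exact_mod_cast hC)
  linarith [le_abs_self (g s - g u)]

theorem hasDerivWithinAt_smul_of_comp {F : Type*} [NormedAddCommGroup F] [NormedSpace ℝ F]
    {D : ℝ → F} {t : ℝ → ℝ} {L v : F} {a : ℝ} {S S' : Set ℝ}
    (hD : HasDerivWithinAt D L S' (t a)) (hcomp : HasDerivWithinAt (fun s => D (t s)) v S a)
    (ht : Tendsto t (𝓝[S] a) (𝓝[S'] t a)) (htO : (fun s => t s - t a) =O[𝓝[S] a] fun s => s - a) :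
    HasDerivWithinAt (fun s => t s • L) v S a := by
  rw [hasDerivWithinAt_iff_isLittleO] at hD hcomp ⊢
  refine (hcomp.sub ((hD.comp_tendsto ht).trans_isBigO htO)).congr_left fun s => ?_
  simp only [Function.comp_apply, sub_smul]
  abel

theorem differentiableWithinAt_of_comp {D t : ℝ → ℝ} {ℓ v a : ℝ} {S S' : Set ℝ}
    (hD : HasDerivWithinAt D ℓ S' (t a)) (hcomp : HasDerivWithinAt (fun s => D (t s)) v S a)
    (ht : Tendsto t (𝓝[S] a) (𝓝[S'] t a)) (htO : (fun s => t s - t a) =O[𝓝[S] a] fun s => s - a)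
    (hS : UniqueDiffWithinAt ℝ S a) (hv : v ≠ 0) : DifferentiableWithinAt ℝ t S a := by
  have hsmul := hasDerivWithinAt_smul_of_comp hD hcomp ht htO
  have hℓ : ℓ ≠ 0 := by
    rintro rfl
    simp only [smul_zero] at hsmul
    exact hv (hS.eq_deriv _ hsmul (hasDerivWithinAt_const ..))
  exact (hsmul.mul_const ℓ⁻¹).differentiableWithinAt.congr_of_eventuallyEq
    (.of_forall fun s => by simp [hℓ]) (by simp [hℓ])

end General

section Frame

/-- The plane `ℝ²` with its Euclidean norm. -/
abbrev Plane := EuclideanSpace ℝ (Fin 2)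

/-- The unit tangent vector `(cos φ, sin φ)` of a curve whose tangent makes the angle `φ` with the
first axis. -/
noncomputable def tangent (φ : ℝ) : Plane := !₂[cos φ, sin φ]

/-- The unit normal `(sin φ, -cos φ)` on the right of `tangent φ`; it points out of a region whose
boundary is traversed counterclockwise. -/
noncomputable def normal (φ : ℝ) : Plane := !₂[sin φ, -cos φ]

theorem inner_tangent_tangent (a b : ℝ) : ⟪tangent a, tangent b⟫ = cos (a - b) := by
  simp [tangent, PiLp.inner_apply, cos_sub, mul_comm]

theorem inner_normal_normal (a b : ℝ) : ⟪normal a, normal b⟫ = cos (a - b) := by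
  simp [normal, PiLp.inner_apply, cos_sub]
  ring

theorem inner_tangent_normal (a b : ℝ) : ⟪tangent a, normal b⟫ = sin (b - a) := by
  simp [tangent, normal, PiLp.inner_apply, sin_sub]
  ring

theorem norm_tangent (φ : ℝ) : ‖tangent φ‖ = 1 := by
  simp [EuclideanSpace.norm_eq, tangent]

theorem norm_normal (φ : ℝ) : ‖normal φ‖ = 1 := by
  simp [EuclideanSpace.norm_eq, normal]

theorem inner_smul_tangent_add_inner_smul_normal (φ : ℝ) (v : Plane) :
    ⟪v, tangent φ⟫ • tangent φ + ⟪v, normal φ⟫ • normal φ = v := by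
  ext i
  fin_cases i <;> simp [tangent, normal, PiLp.inner_apply]
  · linear_combination v 0 * cos_sq_add_sin_sq φ
  · linear_combination v 1 * cos_sq_add_sin_sq φ

theorem lipschitzWith_tangent : LipschitzWith 1 tangent := by
  refine LipschitzWith.of_dist_le_mul fun a b => ?_
  rw [NNReal.coe_one, one_mul, dist_eq_norm, Real.dist_eq]
  refine abs_le_of_sq_le_sq' ?_ (abs_nonneg _) |>.2
  rw [norm_sub_sq_real, norm_tangent, norm_tangent, inner_tangent_tangent, sq_abs]
  linarith [one_sub_sq_div_two_le_cos (x := a - b)]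

theorem normal_add_pi_div_two (φ : ℝ) : normal (φ + π / 2) = tangent φ := by
  simp [normal, tangent, sin_add_pi_div_two, cos_add_pi_div_two]

theorem continuous_normal : Continuous normal := by
  have hshift : normal = fun φ => tangent (φ - π / 2) :=
    funext fun φ => by rw [← normal_add_pi_div_two, sub_add_cancel]
  exact hshift ▸ lipschitzWith_tangent.continuous.comp (continuous_sub_right _)

theorem tangent_antiperiodic : Function.Antiperiodic tangent π := fun φ => by
  ext i
  fin_cases i <;> simp [tangent]

theorem normal_antiperiodic : Function.Antiperiodic normal π := fun φ => by
  ext i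
  fin_cases i <;> simp [normal]

theorem tangent_periodic : Function.Periodic tangent (2 * π) :=
  tangent_antiperiodic.periodic_two_mul

theorem normal_periodic : Function.Periodic normal (2 * π) :=
  normal_antiperiodic.periodic_two_mul

end Frame

section Curve

/-- The unit-speed plane curve issuing from the origin whose tangent at arclength `s` makes the
angle `θ s` with the first axis. -/
noncomputable def curve (θ : ℝ → ℝ) (s : ℝ) : Plane := ∫ u in (0 : ℝ)..s, tangent (θ u)

/-- The signed height of `p` above the tangent line of `curve θ` at `s`, counted positively on the
outer side. -/
noncomputable def height (θ : ℝ → ℝ) (s : ℝ) (p : Plane) : ℝ := ⟪p - curve θ s, normal (θ s)⟫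

/-- The intersection of the inner closed half-planes bounded by the tangent lines of `curve θ`. -/
def body (θ : ℝ → ℝ) : Set Plane := {p | ∀ s, height θ s p ≤ 0}

variable {θ : ℝ → ℝ}

theorem hasDerivAt_curve (hθ : Continuous θ) (s : ℝ) :
    HasDerivAt (curve θ) (tangent (θ s)) s :=
  ((lipschitzWith_tangent.continuous.comp hθ).integral_hasStrictDerivAt 0 s).hasDerivAt

theorem continuous_curve (hθ : Continuous θ) : Continuous (curve θ) :=
  continuous_iff_continuousAt.2 fun s => (hasDerivAt_curve hθ s).continuousAt

theorem deriv_curve (hθ : Continuous θ) : deriv (curve θ) = tangent ∘ θ :=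
  funext fun s => (hasDerivAt_curve hθ s).deriv

theorem contDiff_curve (hθ : Continuous θ) : ContDiff ℝ 1 (curve θ) :=
  contDiff_one_iff_deriv.2 ⟨fun s => (hasDerivAt_curve hθ s).differentiableAt,
    deriv_curve hθ ▸ lipschitzWith_tangent.continuous.comp hθ⟩

theorem norm_deriv_curve (hθ : Continuous θ) (s : ℝ) : ‖deriv (curve θ) s‖ = 1 := by
  rw [deriv_curve hθ, Function.comp_apply, norm_tangent]

theorem lipschitzWith_deriv_curve {C : ℝ≥0} (hθ : LipschitzWith C θ) :
    LipschitzWith C (deriv (curve θ)) := by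
  rw [deriv_curve hθ.continuous, ← one_mul C]
  exact lipschitzWith_tangent.comp hθ

theorem height_curve_self (s : ℝ) : height θ s (curve θ s) = 0 := by
  simp [height]

theorem height_add (s : ℝ) (p v : Plane) :
    height θ s (p + v) = height θ s p + ⟪v, normal (θ s)⟫ := by
  rw [height, height, add_sub_right_comm, inner_add_left]

theorem continuous_height (s : ℝ) : Continuous (height θ s) := by
  unfold height
  fun_prop

theorem continuous_height_left (hθ : Continuous θ) (p : Plane) :
    Continuous fun s => height θ s p :=
  (continuous_const.sub (continuous_curve hθ)).inner (continuous_normal.comp hθ)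

theorem hasDerivAt_height_curve (hθ : Continuous θ) (s u : ℝ) :
    HasDerivAt (fun v => height θ s (curve θ v)) (sin (θ s - θ u)) u := by
  simpa [height, inner_tangent_normal] using
    ((hasDerivAt_curve hθ u).sub_const (curve θ s)).inner ℝ (hasDerivAt_const u (normal (θ s)))

theorem body_eq_iInter : body θ = ⋂ s, height θ s ⁻¹' Iic 0 := by
  ext p
  simp [body]

theorem isClosed_body : IsClosed (body θ) := by
  rw [body_eq_iInter]
  exact isClosed_iInter fun s => isClosed_Iic.preimage (continuous_height s)

theorem convex_body : Convex ℝ (body θ) := by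
  intro p hp q hq a b ha hb hab s
  have haffine : height θ s (a • p + b • q) = a * height θ s p + b * height θ s q := by
    obtain rfl := eq_sub_of_add_eq hab
    simp only [height, inner_sub_left, inner_add_left, real_inner_smul_left]
    ring
  rw [haffine]
  exact add_nonpos (mul_nonpos_of_nonneg_of_nonpos ha (hp s))
    (mul_nonpos_of_nonneg_of_nonpos hb (hq s))

theorem curve_add_smul_normal_notMem_body (s : ℝ) {r : ℝ} (hr : 0 < r) :
    curve θ s + r • normal (θ s) ∉ body θ := fun hmem => by
  have hheight := hmem s
  rw [height_add, height_curve_self, real_inner_smul_left, inner_normal_normal, sub_self, cos_zero,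
    zero_add, mul_one] at hheight
  exact hheight.not_gt hr

theorem curve_notMem_interior_body (s : ℝ) : curve θ s ∉ interior (body θ) := by
  intro hs
  have hnear : ∀ᶠ ε in 𝓝[>] (0 : ℝ), curve θ s + ε • normal (θ s) ∈ body θ :=
    ((by fun_prop : Continuous fun ε : ℝ => curve θ s + ε • normal (θ s)).tendsto' 0 (curve θ s)
      (by simp)).mono_left nhdsWithin_le_nhds |>.eventually (mem_interior_iff_mem_nhds.1 hs)
  obtain ⟨ε, hmem, hε⟩ := (hnear.and self_mem_nhdsWithin).exists
  exact curve_add_smul_normal_notMem_body s hε hmem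

theorem abs_height_curve_le (hcont : Continuous θ) (hmono : Monotone θ) {s u : ℝ}
    (hu : |θ u - θ s| ≤ π / 2) :
    |height θ u (curve θ s)| ≤ |sin (θ u - θ s)| * |u - s| := by
  have hbound : ∀ v ∈ uIcc u s, ‖sin (θ u - θ v)‖ ≤ |sin (θ u - θ s)| := by
    intro v hv
    have hle : |θ u - θ v| ≤ |θ u - θ s| := by
      rw [abs_sub_comm, abs_sub_comm (θ u)]
      exact abs_sub_left_of_mem_uIcc (hmono.mapsTo_uIcc hv)
    rw [Real.norm_eq_abs, abs_sin_eq_sin_abs_of_abs_le_pi (by linarith [pi_pos]),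
      abs_sin_eq_sin_abs_of_abs_le_pi (by linarith [pi_pos])]
    exact sin_le_sin_of_le_of_le_pi_div_two (by linarith [abs_nonneg (θ u - θ v), pi_pos]) hu hle
  have hmvt := (convex_uIcc u s).norm_image_sub_le_of_norm_hasDerivWithin_le
    (fun v _ => (hasDerivAt_height_curve hcont u v).hasDerivWithinAt) hbound left_mem_uIcc
    right_mem_uIcc
  rwa [height_curve_self, sub_zero, Real.norm_eq_abs, Real.norm_eq_abs, abs_sub_comm s] at hmvt

theorem mul_sin_le_of_curve_add_smul_tangent_mem (hcont : Continuous θ) (hmono : Monotone θ)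
    {s u c : ℝ} (hc : curve θ s + c • tangent (θ s) ∈ body θ) (hu : |θ u - θ s| ≤ π / 2) :
    c * sin (θ u - θ s) ≤ |sin (θ u - θ s)| * |u - s| := by
  have hheight := hc u
  rw [height_add, real_inner_smul_left, inner_tangent_normal] at hheight
  linarith [(abs_le.1 (abs_height_curve_le hcont hmono hu)).1]

theorem eq_curve_of_dist_eq_infDist {s r : ℝ} (hs : curve θ s ∈ body θ) (hr : 0 ≤ r) {y : Plane}
    (hy : y ∈ body θ)
    (hdist : dist (curve θ s + r • normal (θ s)) y =
      Metric.infDist (curve θ s + r • normal (θ s)) (body θ)) :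
    y = curve θ s := by
  refine eq_of_dist_eq_infDist_of_inner_nonpos hs hdist ?_
  rw [add_sub_cancel_left, real_inner_smul_left, real_inner_comm]
  exact mul_nonpos_of_nonneg_of_nonpos hr (hy s)

end Curve

section ClosedConvex

/-- `θ` is the tangent angle, as a function of arclength, of a strictly convex closed curve of
length `T`: it increases by `2π` along a period, and the curve returns to its starting point. -/
structure IsClosedConvex (θ : ℝ → ℝ) (T : ℝ) : Prop where
  continuous : Continuous θ
  strictMono : StrictMono θ
  add_period : ∀ s, θ (s + T) = θ s + 2 * π
  curve_period : curve θ T = 0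

namespace IsClosedConvex

variable {θ : ℝ → ℝ} {T : ℝ}

theorem of_antiperiodic (hcont : Continuous θ) (hmono : StrictMono θ)
    (hadd : ∀ s, θ (s + T) = θ s + π) : IsClosedConvex θ (2 * T) where
  continuous := hcont
  strictMono := hmono
  add_period s := by rw [two_mul, ← add_assoc, hadd, hadd]; ring
  curve_period := by
    have hint (a b : ℝ) : IntervalIntegrable (fun u => tangent (θ u)) volume a b :=
      (lipschitzWith_tangent.continuous.comp hcont).intervalIntegrable a b
    have hhalf : ∫ u in T..2 * T, tangent (θ u) = -curve θ T := by
      rw [two_mul]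
      nth_rw 1 [← zero_add T]
      rw [← intervalIntegral.integral_comp_add_right, curve, ← intervalIntegral.integral_neg]
      simp_rw [hadd, tangent_antiperiodic _]
    rw [curve, ← intervalIntegral.integral_add_adjacent_intervals (hint 0 T) (hint T (2 * T)),
      hhalf, curve, add_neg_cancel]

variable (h : IsClosedConvex θ T)
include h

theorem period_pos : 0 < T := by
  have hlt : θ 0 < θ (0 + T) := by linarith [h.add_period 0, two_pi_pos]
  simpa using h.strictMono.lt_iff_lt.1 hlt

theorem tangent_comp_periodic : Function.Periodic (fun s => tangent (θ s)) T := fun s => by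
  simp only [h.add_period, tangent_periodic _]

theorem normal_comp_periodic : Function.Periodic (fun s => normal (θ s)) T := fun s => by
  simp only [h.add_period, normal_periodic _]

theorem curve_periodic : Function.Periodic (curve θ) T := fun s => by
  have hint (a b : ℝ) : IntervalIntegrable (fun u => tangent (θ u)) volume a b :=
    (lipschitzWith_tangent.continuous.comp h.continuous).intervalIntegrable a b
  rw [curve, ← intervalIntegral.integral_add_adjacent_intervals (hint 0 s) (hint s (s + T)),
    h.tangent_comp_periodic.intervalIntegral_add_eq s 0, zero_add]
  simpa [curve] using h.curve_period

theorem height_periodic (p : Plane) : Function.Periodic (fun s => height θ s p) T := fun s => by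
  simp only [height, h.curve_periodic s, h.normal_comp_periodic s]

theorem exists_normal_eq (φ : ℝ) : ∃ s, normal (θ s) = normal φ := by
  obtain ⟨ψ, hψ, heq⟩ := normal_periodic.exists_mem_Ico two_pi_pos φ (θ 0)
  rw [← h.add_period 0] at hψ
  obtain ⟨s, -, rfl⟩ := intermediate_value_Icc (le_add_of_nonneg_right h.period_pos.le)
    h.continuous.continuousOn (Ico_subset_Icc_self hψ)
  exact ⟨s, heq.symm⟩

theorem exists_eq_add_pi (s : ℝ) : ∃ m ∈ Icc s (s + T), θ m = θ s + π := by
  refine intermediate_value_Icc (le_add_of_nonneg_right h.period_pos.le)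
    h.continuous.continuousOn ⟨by linarith [pi_pos], ?_⟩
  rw [h.add_period]
  linarith [pi_pos]

theorem height_curve_neg_of_mem_Ioo {s u : ℝ} (hu : u ∈ Ioo s (s + T)) :
    height θ s (curve θ u) < 0 := by
  obtain ⟨m, hm, hθm⟩ := h.exists_eq_add_pi s
  have hderiv := hasDerivAt_height_curve h.continuous s
  have hcont : Continuous fun v => height θ s (curve θ v) :=
    (continuous_height s).comp (continuous_curve h.continuous)
  rcases le_total u m with hum | hmu
  · have hanti : StrictAntiOn (fun v => height θ s (curve θ v)) (Icc s m) := by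
      refine strictAntiOn_of_deriv_neg (convex_Icc s m) hcont.continuousOn fun v hv => ?_
      rw [interior_Icc] at hv
      rw [(hderiv v).deriv]
      refine sin_neg_of_neg_of_neg_pi_lt ?_ ?_ <;>
        linarith [h.strictMono hv.1, h.strictMono hv.2]
    simpa [height_curve_self] using hanti ⟨le_rfl, hm.1⟩ ⟨hu.1.le, hum⟩ hu.1
  · have hmono : StrictMonoOn (fun v => height θ s (curve θ v)) (Icc m (s + T)) := by
      refine strictMonoOn_of_deriv_pos (convex_Icc _ _) hcont.continuousOn fun v hv => ?_
      rw [interior_Icc] at hv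
      rw [(hderiv v).deriv, ← sin_add_two_pi]
      refine sin_pos_of_pos_of_lt_pi ?_ ?_ <;>
        linarith [h.strictMono hv.1, h.strictMono hv.2, h.add_period s]
    simpa [h.curve_periodic s, height_curve_self] using hmono ⟨hmu, hu.2.le⟩ ⟨hm.2, le_rfl⟩ hu.2

theorem height_curve_neg_of_ne {s u : ℝ} (hne : curve θ u ≠ curve θ s) :
    height θ s (curve θ u) < 0 := by
  obtain ⟨v, hv, heq⟩ := h.curve_periodic.exists_mem_Ico h.period_pos u s
  rw [heq] at hne ⊢
  refine h.height_curve_neg_of_mem_Ioo ⟨hv.1.lt_of_ne ?_, hv.2⟩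
  rintro rfl
  exact hne rfl

theorem curve_mem_body (u : ℝ) : curve θ u ∈ body θ := fun s => by
  by_cases heq : curve θ u = curve θ s
  · rw [heq, height_curve_self]
  · exact (h.height_curve_neg_of_ne heq).le

theorem isBounded_body : Bornology.IsBounded (body θ) := by
  obtain ⟨M, hM⟩ := (h.curve_periodic.compact_of_continuous h.period_pos.ne'
    (continuous_curve h.continuous)).isBounded.exists_norm_le
  have hupper {p : Plane} (hp : p ∈ body θ) (φ : ℝ) : ⟪p, normal φ⟫ ≤ M := by
    obtain ⟨s, hs⟩ := h.exists_normal_eq φ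
    have hheight := hp s
    rw [height, hs, inner_sub_left, sub_nonpos] at hheight
    calc ⟪p, normal φ⟫ ≤ ⟪curve θ s, normal φ⟫ := hheight
      _ ≤ ‖curve θ s‖ * ‖normal φ‖ := real_inner_le_norm _ _
      _ ≤ M := by simpa [norm_normal] using hM _ (mem_range_self s)
  have habs {p : Plane} (hp : p ∈ body θ) (φ : ℝ) : |⟪p, normal φ⟫| ≤ M := by
    refine abs_le'.2 ⟨hupper hp φ, ?_⟩
    rw [← inner_neg_right, ← normal_antiperiodic]
    exact hupper hp (φ + π)
  refine isBounded_iff_forall_norm_le.2 ⟨M + M, fun p hp => ?_⟩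
  calc ‖p‖ = ‖⟪p, tangent 0⟫ • tangent 0 + ⟪p, normal 0⟫ • normal 0‖ := by
        rw [inner_smul_tangent_add_inner_smul_normal]
    _ ≤ |⟪p, tangent 0⟫| + |⟪p, normal 0⟫| := by
        simpa [norm_smul, norm_tangent, norm_normal] using
          norm_add_le (⟪p, tangent 0⟫ • tangent 0) (⟪p, normal 0⟫ • normal 0)
    _ ≤ M + M := by
        rw [← normal_add_pi_div_two]
        exact add_le_add (habs hp _) (habs hp _)

theorem isCompact_body : IsCompact (body θ) :=
  Metric.isCompact_of_isClosed_isBounded isClosed_body h.isBounded_body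

theorem mem_interior_body_of_height_neg {p : Plane} (hp : ∀ s, height θ s p < 0) :
    p ∈ interior (body θ) := by
  obtain ⟨_, ⟨m, rfl⟩, hmax⟩ := ((h.height_periodic p).compact_of_continuous h.period_pos.ne'
    (continuous_height_left h.continuous p)).exists_isGreatest (range_nonempty _)
  refine mem_interior.2 ⟨Metric.ball p (-height θ m p), fun y hy s => ?_, Metric.isOpen_ball,
    Metric.mem_ball_self (neg_pos.2 (hp m))⟩
  have hshift : height θ s y = height θ s p + ⟪y - p, normal (θ s)⟫ := by
    rw [← height_add, add_sub_cancel]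
  have hinner : ⟪y - p, normal (θ s)⟫ ≤ ‖y - p‖ := by
    simpa [norm_normal] using real_inner_le_norm (y - p) (normal (θ s))
  have hs : height θ s p ≤ height θ m p := hmax (mem_range_self s)
  rw [mem_ball_iff_norm] at hy
  linarith

theorem nonempty_interior_body : (interior (body θ)).Nonempty := by
  have hT := h.period_pos
  have hne : curve θ (T / 2) ≠ curve θ 0 := by
    intro heq
    have hneg := h.height_curve_neg_of_mem_Ioo (s := 0) (u := T / 2) ⟨by linarith, by linarith⟩
    rw [heq, height_curve_self] at hneg
    exact hneg.false
  refine ⟨midpoint ℝ (curve θ 0) (curve θ (T / 2)), h.mem_interior_body_of_height_neg fun s => ?_⟩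
  have hmid : height θ s (midpoint ℝ (curve θ 0) (curve θ (T / 2))) =
      (height θ s (curve θ 0) + height θ s (curve θ (T / 2))) / 2 := by
    simp only [height, midpoint_eq_smul_add, invOf_eq_inv, inner_sub_left, inner_add_left,
      real_inner_smul_left]
    ring
  rw [hmid]
  by_cases heq : curve θ 0 = curve θ s
  · linarith [h.curve_mem_body 0 s, h.height_curve_neg_of_ne (heq ▸ hne)]
  · linarith [h.curve_mem_body (T / 2) s, h.height_curve_neg_of_ne heq]

theorem eq_zero_of_curve_add_smul_tangent_mem {s c : ℝ}
    (hc : curve θ s + c • tangent (θ s) ∈ body θ) : c = 0 := by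
  have hnear : ∀ᶠ u in 𝓝 s, |θ u - θ s| < π / 2 :=
    (h.continuous.tendsto s).eventually (eventually_abs_sub_lt _ (by positivity))
  have hbound {u : ℝ} (hu : |θ u - θ s| < π / 2) :=
    mul_sin_le_of_curve_add_smul_tangent_mem h.continuous h.strictMono.monotone hc hu.le
  have hlim : Tendsto (fun u => u - s) (𝓝 s) (𝓝 0) :=
    (continuous_sub_right s).tendsto' s 0 (sub_self s)
  -- Dividing `hbound` by `sin (θ u - θ s)`, which has the sign of `u - s`, gives `c ≤ u - s` for
  -- `u > s` and `u - s ≤ c` for `u < s`.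
  apply le_antisymm
  · refine ge_of_tendsto (hlim.mono_left (nhdsWithin_le_nhds (s := Ioi s))) ?_
    filter_upwards [nhdsWithin_le_nhds hnear, self_mem_nhdsWithin] with u hu hsu
    have hsin : 0 < sin (θ u - θ s) := sin_pos_of_pos_of_lt_pi (sub_pos.2 (h.strictMono hsu))
      (by linarith [(abs_lt.1 hu).2, pi_pos])
    have hle := hbound hu
    rw [abs_of_pos hsin, abs_of_pos (sub_pos.2 hsu), mul_comm] at hle
    exact le_of_mul_le_mul_left hle hsin
  · refine le_of_tendsto (hlim.mono_left (nhdsWithin_le_nhds (s := Iio s))) ?_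
    filter_upwards [nhdsWithin_le_nhds hnear, self_mem_nhdsWithin] with u hu hus
    have hsin : sin (θ u - θ s) < 0 := sin_neg_of_neg_of_neg_pi_lt
      (sub_neg.2 (h.strictMono hus)) (by linarith [(abs_lt.1 hu).1, pi_pos])
    have hle := hbound hu
    rw [abs_of_neg hsin, abs_of_neg (sub_neg.2 hus), neg_mul_neg, mul_comm] at hle
    exact (mul_le_mul_left_of_neg hsin).1 hle

theorem eq_curve_of_height_eq_zero {p : Plane} (hp : p ∈ body θ) {s : ℝ} (hs : height θ s p = 0) :
    p = curve θ s := by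
  have hframe := inner_smul_tangent_add_inner_smul_normal (θ s) (p - curve θ s)
  rw [show ⟪p - curve θ s, normal (θ s)⟫ = 0 from hs, zero_smul, add_zero] at hframe
  have hzero : ⟪p - curve θ s, tangent (θ s)⟫ = 0 :=
    h.eq_zero_of_curve_add_smul_tangent_mem (by rwa [hframe, add_sub_cancel])
  rwa [hzero, zero_smul, eq_comm, sub_eq_zero] at hframe

theorem range_curve : range (curve θ) = frontier (body θ) := by
  refine Subset.antisymm ?_ fun p hp => ?_
  · rintro _ ⟨s, rfl⟩
    exact ⟨subset_closure (h.curve_mem_body s), curve_notMem_interior_body s⟩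
  · have hpK : p ∈ body θ := isClosed_body.frontier_subset hp
    obtain ⟨s, hs⟩ : ∃ s, 0 ≤ height θ s p := by
      by_contra! hneg
      exact hp.2 (h.mem_interior_body_of_height_neg hneg)
    exact ⟨s, (h.eq_curve_of_height_eq_zero hpK (le_antisymm (hpK s) hs)).symm⟩

end IsClosedConvex

end ClosedConvex

section Projection

/-- The parameter `t` at which the line `curve θ s₀ + r • normal (θ s₀) + t • tangent (θ s₀)` meets
the normal line to `curve θ` at `s`. -/
noncomputable def normalParam (θ : ℝ → ℝ) (s₀ r s : ℝ) : ℝ :=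
  ⟪curve θ s - curve θ s₀, tangent (θ s₀)⟫ + (r - height θ s₀ (curve θ s)) * tan (θ s - θ s₀)

variable {θ : ℝ → ℝ} {s₀ r : ℝ}

theorem normalParam_self : normalParam θ s₀ r s₀ = 0 := by
  simp [normalParam]

theorem curve_add_smul_normal_eq {s : ℝ} (hcos : cos (θ s - θ s₀) ≠ 0) :
    curve θ s + ((r - height θ s₀ (curve θ s)) / cos (θ s - θ s₀)) • normal (θ s) =
      curve θ s₀ + r • normal (θ s₀) + normalParam θ s₀ r s • tangent (θ s₀) := by
  have hcurve : curve θ s = curve θ s₀ +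
      (⟪curve θ s - curve θ s₀, tangent (θ s₀)⟫ • tangent (θ s₀) +
        height θ s₀ (curve θ s) • normal (θ s₀)) := by
    rw [height, inner_smul_tangent_add_inner_smul_normal, add_sub_cancel]
  have hnormal := inner_smul_tangent_add_inner_smul_normal (θ s₀) (normal (θ s))
  rw [real_inner_comm, inner_tangent_normal, inner_normal_normal] at hnormal
  rw [normalParam, tan_eq_sin_div_cos, ← hnormal]
  nth_rw 1 [hcurve]
  match_scalars <;> field_simp
  ring

theorem hasDerivAt_inner_curve (hθ : Continuous θ) (s₀ : ℝ) :
    HasDerivAt (fun s => ⟪curve θ s - curve θ s₀, tangent (θ s₀)⟫) 1 s₀ := by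
  simpa [norm_tangent] using ((hasDerivAt_curve hθ s₀).sub_const (curve θ s₀)).inner ℝ
    (hasDerivAt_const s₀ (tangent (θ s₀)))

theorem hasDerivAt_height_curve_self (hθ : Continuous θ) (s₀ : ℝ) :
    HasDerivAt (fun s => height θ s₀ (curve θ s)) 0 s₀ := by
  simpa using hasDerivAt_height_curve hθ s₀ s₀

theorem normalParam_isBigO {C : ℝ≥0} (hθ : LipschitzWith C θ) :
    normalParam θ s₀ r =O[𝓝 s₀] fun s => s - s₀ := by
  have hcurve := (hasDerivAt_inner_curve hθ.continuous s₀).isBigO_sub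
  have hangle : (fun s => θ s - θ s₀) =O[𝓝 s₀] fun s => s - s₀ :=
    .of_bound C (.of_forall fun s => hθ.norm_sub_le s s₀)
  have hlim : Tendsto (fun s => θ s - θ s₀) (𝓝 s₀) (𝓝 0) :=
    (hθ.continuous.sub continuous_const).tendsto' s₀ 0 (sub_self _)
  have htan : (fun s => tan (θ s - θ s₀)) =O[𝓝 s₀] fun s => θ s - θ s₀ := by
    have htan_zero := (hasDerivAt_tan (x := 0) (by simp)).isBigO_sub
    simp only [tan_zero, sub_zero] at htan_zero
    exact htan_zero.comp_tendsto hlim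
  have hheight : (fun s => r - height θ s₀ (curve θ s)) =O[𝓝 s₀] fun _ => (1 : ℝ) :=
    (continuousAt_const.sub
      (hasDerivAt_height_curve_self hθ.continuous s₀).continuousAt).isBigO_one ℝ
  refine (hcurve.congr_left fun s => by simp).add ?_
  simpa using hheight.mul (htan.trans hangle)

theorem eventually_angle_sub_mem_Ioo (hcont : Continuous θ) (hmono : StrictMono θ) (s₀ : ℝ) :
    ∀ᶠ s in 𝓝[>] s₀, θ s - θ s₀ ∈ Ioo 0 (π / 2) := by
  have hlt : ∀ᶠ s in 𝓝[>] s₀, θ s < θ s₀ + π / 2 :=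
    nhdsWithin_le_nhds ((hcont.tendsto s₀).eventually_lt_const (by linarith [pi_pos]))
  filter_upwards [hlt, self_mem_nhdsWithin] with s hs hs₀
  exact ⟨sub_pos.2 (hmono hs₀), by linarith⟩

theorem eventually_inner_curve_pos (hθ : Continuous θ) (s₀ : ℝ) :
    ∀ᶠ s in 𝓝[>] s₀, 0 < ⟪curve θ s - curve θ s₀, tangent (θ s₀)⟫ := by
  have hslope := (hasDerivWithinAt_iff_tendsto_slope' self_notMem_Ioi).1
    (hasDerivAt_inner_curve hθ s₀).hasDerivWithinAt
  filter_upwards [hslope.eventually_const_lt one_pos, self_mem_nhdsWithin] with s hs hs₀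
  simpa using (slope_pos_iff_of_le (le_of_lt hs₀)).1 hs

theorem differentiableWithinAt_of_normalParam (hcont : Continuous θ) (hmono : StrictMono θ)
    (hr : r ≠ 0) (hdiff : DifferentiableWithinAt ℝ (normalParam θ s₀ r) (Ioi s₀) s₀) :
    DifferentiableWithinAt ℝ θ (Ioi s₀) s₀ := by
  have hinner := (hasDerivAt_inner_curve hcont s₀).differentiableAt.differentiableWithinAt
    (s := Ioi s₀)
  have hheight := (hasDerivAt_height_curve_self hcont s₀).differentiableAt.differentiableWithinAt
    (s := Ioi s₀)
  have hr' : r - height θ s₀ (curve θ s₀) ≠ 0 := by rwa [height_curve_self, sub_zero]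
  refine ((((hdiff.sub hinner).div (hheight.const_sub r) hr').arctan).const_add
    (θ s₀)).congr_of_eventuallyEq ?_ (by simp [normalParam_self])
  have hne : ∀ᶠ s in 𝓝[>] s₀, r - height θ s₀ (curve θ s) ≠ 0 :=
    (continuousWithinAt_const.sub hheight.continuousWithinAt).eventually_ne hr'
  filter_upwards [hne, eventually_angle_sub_mem_Ioo hcont hmono s₀] with s hs hangle
  simp only [Pi.div_apply, Pi.sub_apply, normalParam, add_sub_cancel_left,
    mul_div_cancel_left₀ _ hs]
  rw [arctan_tan (by linarith [hangle.1, pi_pos]) hangle.2, add_sub_cancel]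

namespace IsClosedConvex

variable {T : ℝ} (h : IsClosedConvex θ T)
include h

theorem eventually_normalParam_pos (hr : 0 ≤ r) : ∀ᶠ s in 𝓝[>] s₀, 0 < normalParam θ s₀ r s := by
  filter_upwards [eventually_inner_curve_pos h.continuous s₀,
    eventually_angle_sub_mem_Ioo h.continuous h.strictMono s₀] with s hs hangle
  exact add_pos_of_pos_of_nonneg hs <| mul_nonneg
    (sub_nonneg.2 ((h.curve_mem_body s s₀).trans hr))
    (tan_nonneg_of_nonneg_of_le_pi_div_two hangle.1.le hangle.2.le)

theorem tendsto_normalParam {C : ℝ≥0} (hθ : LipschitzWith C θ) (hr : 0 ≤ r) :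
    Tendsto (normalParam θ s₀ r) (𝓝[>] s₀) (𝓝[>] 0) := by
  refine tendsto_nhdsWithin_iff.2 ⟨?_, h.eventually_normalParam_pos hr⟩
  have hlim : Tendsto (fun s => s - s₀) (𝓝 s₀) (𝓝 0) :=
    (continuous_sub_right s₀).tendsto' s₀ 0 (sub_self s₀)
  exact ((normalParam_isBigO hθ).trans_tendsto hlim).mono_left nhdsWithin_le_nhds

variable {P : Plane → Plane} (hP : ∀ y, P y ∈ body θ ∧ dist y (P y) = Metric.infDist y (body θ))
include hP

theorem projection_curve_add_smul_normal (s : ℝ) (hr : 0 ≤ r) :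
    P (curve θ s + r • normal (θ s)) = curve θ s :=
  eq_curve_of_dist_eq_infDist (h.curve_mem_body s) hr (hP _).1 (hP _).2

theorem projection_normalParam (hr : 0 ≤ r) {s : ℝ} (hcos : 0 < cos (θ s - θ s₀)) :
    P (curve θ s₀ + r • normal (θ s₀) + normalParam θ s₀ r s • tangent (θ s₀)) = curve θ s := by
  rw [← curve_add_smul_normal_eq hcos.ne']
  exact h.projection_curve_add_smul_normal hP s
    (div_nonneg (sub_nonneg.2 ((h.curve_mem_body s s₀).trans hr)) hcos.le)

theorem differentiableWithinAt_of_projection {C : ℝ≥0} (hθ : LipschitzWith C θ) (hr : 0 < r)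
    (hdiff : DifferentiableWithinAt ℝ
      (fun t : ℝ => P (curve θ s₀ + r • normal (θ s₀) + t • tangent (θ s₀))) (Ioi 0) 0) :
    DifferentiableWithinAt ℝ θ (Ioi s₀) s₀ := by
  set x := curve θ s₀ + r • normal (θ s₀) with hx
  set D : ℝ → ℝ := fun t => ⟪P (x + t • tangent (θ s₀)) - curve θ s₀, tangent (θ s₀)⟫ with hD
  have hDdiff : DifferentiableWithinAt ℝ D (Ioi 0) (normalParam θ s₀ r s₀) := by
    rw [normalParam_self]
    exact (hdiff.sub_const _).inner ℝ (differentiableWithinAt_const _)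
  have hDcomp {s : ℝ} (hcos : 0 < cos (θ s - θ s₀)) :
      D (normalParam θ s₀ r s) = ⟪curve θ s - curve θ s₀, tangent (θ s₀)⟫ := by
    rw [hD, hx]
    simp only [h.projection_normalParam hP hr.le hcos]
  have hDcomp_eventually : (fun s => D (normalParam θ s₀ r s)) =ᶠ[𝓝[>] s₀]
      fun s => ⟪curve θ s - curve θ s₀, tangent (θ s₀)⟫ :=
    (eventually_angle_sub_mem_Ioo h.continuous h.strictMono s₀).mono fun s hangle =>
      hDcomp (cos_pos_of_mem_Ioo ⟨by linarith [hangle.1, pi_pos], hangle.2⟩)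
  have hcomp := (hasDerivAt_inner_curve h.continuous s₀).hasDerivWithinAt.congr_of_eventuallyEq
    hDcomp_eventually (hDcomp (by simp))
  have htendsto : Tendsto (normalParam θ s₀ r) (𝓝[>] s₀) (𝓝[>] normalParam θ s₀ r s₀) := by
    rw [normalParam_self]
    exact h.tendsto_normalParam hθ hr.le
  have hbigO : (fun s => normalParam θ s₀ r s - normalParam θ s₀ r s₀) =O[𝓝[>] s₀]
      fun s => s - s₀ := by
    simpa only [normalParam_self, sub_zero] using (normalParam_isBigO hθ).mono nhdsWithin_le_nhds
  refine differentiableWithinAt_of_normalParam h.continuous h.strictMono hr.ne' ?_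
  rw [← normalParam_self (θ := θ) (s₀ := s₀) (r := r)] at hDdiff
  exact differentiableWithinAt_of_comp hDdiff.hasDerivWithinAt hcomp htendsto hbigO
    (uniqueDiffWithinAt_Ioi s₀) one_ne_zero

end IsClosedConvex

end Projection

section Oscillation

/-- A Lipschitz function on `[0, ∞)` whose difference quotients at `0` oscillate between `-1` and
`1`. -/
noncomputable def logOscillation (r : ℝ) : ℝ := r * sin (log r)

theorem hasDerivAt_logOscillation {r : ℝ} (hr : r ≠ 0) :
    HasDerivAt logOscillation (sin (log r) + cos (log r)) r := by
  refine ((hasDerivAt_id r).mul (hasDerivAt_log hr).sin).congr_deriv ?_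
  simp only [id]
  field_simp

theorem abs_logOscillation_le (r : ℝ) : |logOscillation r| ≤ |r| := by
  rw [logOscillation, abs_mul]
  exact mul_le_of_le_one_right (abs_nonneg r) (abs_sin_le_one _)

theorem continuousAt_logOscillation_zero : ContinuousAt logOscillation 0 := by
  rw [ContinuousAt, logOscillation, zero_mul]
  exact squeeze_zero_norm abs_logOscillation_le (continuous_abs.tendsto' 0 0 abs_zero)

theorem lipschitzOnWith_logOscillation : LipschitzOnWith 2 logOscillation (Ici 0) := by
  have hpos : LipschitzOnWith 2 logOscillation (Ioi 0) := by
    refine (convex_Ioi 0).lipschitzOnWith_of_nnnorm_hasDerivWithin_le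
      (fun r hr => (hasDerivAt_logOscillation (ne_of_gt hr)).hasDerivWithinAt) fun r _ => ?_
    rw [← NNReal.coe_le_coe, coe_nnnorm]
    calc ‖sin (log r) + cos (log r)‖ ≤ |sin (log r)| + |cos (log r)| := abs_add_le _ _
      _ ≤ 1 + 1 := add_le_add (abs_sin_le_one _) (abs_cos_le_one _)
      _ = (2 : ℝ≥0) := by norm_num
  rw [← closure_Ioi]
  refine hpos.closure fun r hr => ?_
  rw [closure_Ioi] at hr
  rcases eq_or_lt_of_le (mem_Ici.1 hr) with rfl | hr
  · exact continuousAt_logOscillation_zero.continuousWithinAt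
  · exact (hasDerivAt_logOscillation hr.ne').continuousAt.continuousWithinAt

theorem not_differentiableWithinAt_logOscillation :
    ¬DifferentiableWithinAt ℝ logOscillation (Ioi 0) 0 := by
  intro hdiff
  have hslope := (hasDerivWithinAt_iff_tendsto_slope' self_notMem_Ioi).1 hdiff.hasDerivWithinAt
  set ℓ := derivWithin logOscillation (Ioi 0) 0
  have hsin : Tendsto sin atBot (𝓝 ℓ) := by
    refine (hslope.comp tendsto_exp_atBot_nhdsGT).congr fun x => ?_
    simp [slope_def_field, logOscillation, (exp_pos x).ne']
  have hzero := periodic_eq_of_tendsto_atBot sin_periodic two_pi_pos hsin 0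
  have hone := periodic_eq_of_tendsto_atBot sin_periodic two_pi_pos hsin (π / 2)
  rw [sin_zero] at hzero
  rw [sin_pi_div_two, ← hzero] at hone
  exact one_ne_zero hone

/-- A tangent angle with Lipschitz constant `3 / 2` and no right derivative at `0`: the identity,
which is the tangent angle of the unit circle, plus a `π`-periodic oscillation. -/
noncomputable def oscillatingAngle (s : ℝ) : ℝ := s + logOscillation |sin s| / 4

theorem lipschitzWith_logOscillation_abs_sin :
    LipschitzWith (1 / 2) fun s => logOscillation |sin s| / 4 := by
  refine LipschitzWith.of_dist_le_mul fun s u => ?_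
  have hosc := lipschitzOnWith_logOscillation.dist_le_mul _ (abs_nonneg (sin s)) _
    (abs_nonneg (sin u))
  have habs : dist |sin s| |sin u| ≤ dist (sin s) (sin u) := abs_abs_sub_abs_le_abs_sub _ _
  have hsin := lipschitzWith_sin.dist_le_mul s u
  rw [dist_eq, ← sub_div, abs_div, ← dist_eq]
  norm_num at hosc hsin ⊢
  linarith

theorem lipschitzWith_oscillatingAngle : LipschitzWith (1 + 1 / 2) oscillatingAngle :=
  LipschitzWith.id.add lipschitzWith_logOscillation_abs_sin

theorem isClosedConvex_oscillatingAngle : IsClosedConvex oscillatingAngle (2 * π) :=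
  .of_antiperiodic lipschitzWith_oscillatingAngle.continuous
    (strictMono_id_add_of_lipschitzWith lipschitzWith_logOscillation_abs_sin
      (by exact_mod_cast (one_half_lt_one : (1 / 2 : ℝ) < 1)))
    fun s => by simp only [oscillatingAngle, sin_add_pi, abs_neg]; ring

theorem not_differentiableWithinAt_oscillatingAngle :
    ¬DifferentiableWithinAt ℝ oscillatingAngle (Ioi 0) 0 := by
  intro hdiff
  have harcsin : DifferentiableWithinAt ℝ arcsin (Ioi 0) 0 :=
    (differentiableAt_arcsin.2 ⟨by norm_num, by norm_num⟩).differentiableWithinAt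
  rw [← arcsin_zero] at hdiff
  have hcomp := hdiff.comp 0 harcsin fun r hr => by simpa [arcsin_zero] using hr
  refine not_differentiableWithinAt_logOscillation <|
    ((hcomp.sub harcsin).const_mul 4).congr_of_eventuallyEq ?_
      (by simp [oscillatingAngle, logOscillation])
  filter_upwards [Ioo_mem_nhdsGT one_pos] with r hr
  rw [Pi.sub_apply, Function.comp_apply, oscillatingAngle, sin_arcsin (by linarith [hr.1]) hr.2.le,
    abs_of_pos hr.1]
  ring

end Oscillation

end TangentAngle

open TangentAngle

/-- There is a compact convex set `K ⊂ ℝ²` with nonempty interior and `C^{1,1}` boundary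
(a `C¹` unit-speed boundary parametrization with Lipschitz derivative), a point `x ∉ K`
and a nonzero direction `w`, such that the one-sided directional derivative
`lim_{t→0⁺} (Π(x + t w) − Π(x))/t` of the metric projection `Π` onto `K` does not exist. -/
theorem exists_C11_convex_body_projection_not_one_sided_differentiable :
    ∃ K : Set (EuclideanSpace ℝ (Fin 2)),
      IsCompact K ∧ Convex ℝ K ∧ (interior K).Nonempty ∧
      (∃ z : ℝ → EuclideanSpace ℝ (Fin 2),
        ContDiff ℝ 1 z ∧ Set.range z = frontier K ∧ (∀ s, ‖deriv z s‖ = 1) ∧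
        ∃ L : NNReal, LipschitzWith L (deriv z)) ∧
      ∃ x : EuclideanSpace ℝ (Fin 2), x ∉ K ∧
        ∃ w : EuclideanSpace ℝ (Fin 2), w ≠ 0 ∧
          ∀ P : EuclideanSpace ℝ (Fin 2) → EuclideanSpace ℝ (Fin 2),
            (∀ y, P y ∈ K ∧ dist y (P y) = Metric.infDist y K) →
            ¬ ∃ L : EuclideanSpace ℝ (Fin 2),
                Filter.Tendsto (fun t : ℝ => t⁻¹ • (P (x + t • w) - P x))
                  (nhdsWithin 0 (Set.Ioi 0)) (nhds L) := by
  set θ := oscillatingAngle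
  have hθ := isClosedConvex_oscillatingAngle
  have hlip := lipschitzWith_oscillatingAngle
  refine ⟨body θ, hθ.isCompact_body, convex_body, hθ.nonempty_interior_body,
    ⟨curve θ, contDiff_curve hθ.continuous, hθ.range_curve, norm_deriv_curve hθ.continuous, _,
      lipschitzWith_deriv_curve hlip⟩,
    curve θ 0 + (1 : ℝ) • normal (θ 0), curve_add_smul_normal_notMem_body 0 one_pos,
    tangent (θ 0), ?_, ?_⟩
  · exact norm_ne_zero_iff.1 (by simp [norm_tangent])
  · rintro P hP ⟨L, hL⟩
    have hderiv : HasDerivWithinAt (fun t : ℝ => P (curve θ 0 + (1 : ℝ) • normal (θ 0) +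
        t • tangent (θ 0))) L (Ioi 0) 0 := by
      rw [hasDerivWithinAt_iff_tendsto_slope' self_notMem_Ioi]
      simpa [slope_fun_def] using hL
    exact not_differentiableWithinAt_oscillatingAngle
      (hθ.differentiableWithinAt_of_projection hP hlip one_pos hderiv.differentiableWithinAt)
end

section
/- Let K ⊂ ℝ³ be a compact convex body whose boundary is a twice continuously differentiable surface (a C² two-dimensional submanifold of ℝ³), let Π be the metric projection onto K, and let c : ℝ → ℝ³ \ K be a differentiable curve. Then the one-sided derivative lim_{t→0⁺} (Π(c(t)) − Π(c(0)))/t exists. -/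
/-!
Let `x ∉ K` and let `σ` parametrize the boundary of `K` near the nearest point `P x`. At a nearest
point `σ v` the vector `y - σ v` is orthogonal to the patch, which is an equation in `(y, v)`. Since
`P x` maximizes the linear functional `⟪x - P x, ·⟫` over `K`, the derivative of this equation in
`v` at `x` is the sum of a negative semidefinite second-order term and minus the first fundamental
form, hence invertible. The implicit function theorem gives foot points `σ (ψ y)` depending smoothly
on `y`. As the boundary has codimension one, `y - σ (ψ y)` is proportional to a supporting normal of
`K`, so by convexity the foot point is the nearest point. Therefore `P` is differentiable at `x`,
and the chain rule applies to `P ∘ c`.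
-/

open Filter Module Set Topology
open scoped ContDiff InnerProductSpace

section NormalCone

variable {E G : Type*} [NormedAddCommGroup E] [InnerProductSpace ℝ E]
  [NormedAddCommGroup G] [NormedSpace ℝ G] {K : Set E} {p m : E}

/-- The normal cone of convex analysis: the outward normals at `p` to hyperplanes through `p`
that support `K`. -/
def normalCone (K : Set E) (p : E) : Set E := {m | ∀ w ∈ K, ⟪m, w - p⟫_ℝ ≤ 0}

lemma isLocalMax_inner_of_mem_normalCone {X : Type*} [TopologicalSpace X] {σ : X → E} {q : X}
    (hmem : ∀ᶠ v in 𝓝 q, σ v ∈ K) (hm : m ∈ normalCone K (σ q)) :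
    IsLocalMax (innerSL ℝ m ∘ σ) q := by
  filter_upwards [hmem] with v hv
  simpa [inner_sub_right] using hm _ hv

lemma inner_fderiv_eq_zero_of_mem_normalCone {σ : G → E} {q : G} (hσ : DifferentiableAt ℝ σ q)
    (hmem : ∀ᶠ v in 𝓝 q, σ v ∈ K) (hm : m ∈ normalCone K (σ q)) (h : G) :
    ⟪m, fderiv ℝ σ q h⟫_ℝ = 0 := by
  have hderiv := (innerSL ℝ m).hasFDerivAt.comp q hσ.hasFDerivAt
  simpa using DFunLike.congr_fun
    ((isLocalMax_inner_of_mem_normalCone hmem hm).hasFDerivAt_eq_zero hderiv) h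

lemma eq_zero_of_mem_normalCone_of_mem_interior (hp : p ∈ interior K) (hm : m ∈ normalCone K p) :
    m = 0 := by
  have h := inner_fderiv_eq_zero_of_mem_normalCone (σ := id) differentiableAt_id
    (mem_interior_iff_mem_nhds.mp hp) hm m
  simpa using h

lemma smul_mem_normalCone_of_inner_neg (hm : m ∈ normalCone K p) {a : ℝ} {z : E} (hz : z ∈ K)
    (hneg : ⟪a • m, z - p⟫_ℝ < 0) : a • m ∈ normalCone K p := by
  intro w hw
  rw [real_inner_smul_left] at hneg ⊢
  have ha : 0 ≤ a := le_of_not_gt fun ha ↦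
    hneg.not_ge (mul_nonneg_of_nonpos_of_nonpos ha.le (hm z hz))
  exact mul_nonpos_of_nonneg_of_nonpos ha (hm w hw)

lemma exists_ne_zero_mem_normalCone [FiniteDimensional ℝ E] (hK : Convex ℝ K) (hpK : p ∈ K)
    (hp : p ∉ interior K) : ∃ m ≠ 0, m ∈ normalCone K p := by
  have := FiniteDimensional.complete ℝ E
  by_cases hint : (interior K).Nonempty
  · obtain ⟨f, hf, hfK⟩ := geometric_hahn_banach_of_nonempty_interior_point hK hp hint
    refine ⟨(InnerProductSpace.toDual ℝ E).symm f, by simpa using hf, fun w hw ↦ ?_⟩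
    simpa [InnerProductSpace.toDual_symm_apply] using hfK w hw
  · have hspan : vectorSpan ℝ K ≠ ⊤ := by
      rwa [← direction_affineSpan, Ne, AffineSubspace.direction_eq_top_iff_of_nonempty
        ((affineSpan_nonempty ℝ).mpr ⟨p, hpK⟩),
        ← hK.interior_nonempty_iff_affineSpan_eq_top]
    obtain ⟨m, hm, hm0⟩ := Submodule.exists_mem_ne_zero_of_ne_bot
      (mt (Submodule.orthogonal_eq_bot_iff).mp hspan)
    exact ⟨m, hm0, fun w hw ↦
      ((Submodule.mem_orthogonal' _ m).mp hm _ (vsub_mem_vectorSpan ℝ hw hpK)).le⟩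

end NormalCone

section MetricProjection

/-- `P` is a metric projection onto `K`: it sends every point to a point of `K` at minimal
distance. -/
def IsMetricProjection {X : Type*} [PseudoMetricSpace X] (K : Set X) (P : X → X) : Prop :=
  ∀ y, P y ∈ K ∧ dist y (P y) = Metric.infDist y K

namespace IsMetricProjection

lemma isClosed {X : Type*} [MetricSpace X] {K : Set X} {P : X → X} (hP : IsMetricProjection K P) :
    IsClosed K := by
  refine isClosed_of_closure_subset fun y hy ↦ ?_
  have h : dist y (P y) = 0 := (hP y).2.trans
    ((Metric.mem_closure_iff_infDist_zero ⟨P y, (hP y).1⟩).mp hy)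
  exact dist_eq_zero.mp h ▸ (hP y).1

variable {E : Type*} [NormedAddCommGroup E] [InnerProductSpace ℝ E] {K : Set E} {P : E → E}

lemma sub_mem_normalCone (hP : IsMetricProjection K P) (hK : Convex ℝ K) (x : E) :
    x - P x ∈ normalCone K (P x) := by
  refine (norm_eq_iInf_iff_real_inner_le_zero hK (hP x).1).mp ?_
  rw [← dist_eq_norm, (hP x).2, Metric.infDist_eq_iInf]
  simp only [dist_eq_norm]

lemma eq_of_sub_mem_normalCone (hP : IsMetricProjection K P) (hK : Convex ℝ K) {x v : E}
    (hv : v ∈ K) (hx : x - v ∈ normalCone K v) : P x = v := by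
  have h₁ := hP.sub_mem_normalCone hK x v hv
  have h₂ := hx (P x) (hP x).1
  have hsum : ⟪P x - v, P x - v⟫_ℝ = ⟪x - P x, v - P x⟫_ℝ + ⟪x - v, P x - v⟫_ℝ := by
    rw [← neg_sub (P x) v, inner_neg_right, neg_add_eq_sub, ← inner_sub_left,
      sub_sub_sub_cancel_left]
  exact sub_eq_zero.mp (real_inner_self_nonpos.mp (hsum.trans_le (add_nonpos h₁ h₂)))

lemma mem_frontier (hP : IsMetricProjection K P) (hK : Convex ℝ K) {x : E} (hx : x ∉ K) :
    P x ∈ frontier K := by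
  refine ⟨subset_closure (hP x).1, fun hint ↦ hx ?_⟩
  have h := eq_zero_of_mem_normalCone_of_mem_interior hint (hP.sub_mem_normalCone hK x)
  exact sub_eq_zero.mp h ▸ (hP x).1

end IsMetricProjection

end MetricProjection

section SecondOrder

variable {F G : Type*} [NormedAddCommGroup F] [NormedSpace ℝ F]
  [NormedAddCommGroup G] [NormedSpace ℝ G]

lemma deriv_deriv_nonpos_of_isLocalMax {f : ℝ → ℝ} {a : ℝ} (hmax : IsLocalMax f a)
    (hf : ContinuousAt f a) : deriv (deriv f) a ≤ 0 := by
  by_contra! hpos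
  have hmin : IsLocalMin f a := isLocalMin_of_deriv_deriv_pos hpos hmax.deriv_eq_zero hf
  have hconst : f =ᶠ[𝓝 a] fun _ ↦ f a := (hmax.and hmin).mono fun _ h ↦ le_antisymm h.1 h.2
  simp [hconst.deriv.deriv_eq] at hpos

lemma deriv_deriv_comp_line {f : G → F} {q : G} (hf : ContDiffAt ℝ 2 f q) (h : G) :
    deriv (deriv fun t : ℝ ↦ f (q + t • h)) 0 = fderiv ℝ (fderiv ℝ f) q h h := by
  have hline (t : ℝ) : HasDerivAt (fun t : ℝ ↦ q + t • h) h t := by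
    simpa using ((hasDerivAt_id t).smul_const h).const_add q
  have hline_tendsto : Tendsto (fun t : ℝ ↦ q + t • h) (𝓝 0) (𝓝 q) := by
    simpa using (hline 0).continuousAt.tendsto
  have hderiv : deriv (fun t : ℝ ↦ f (q + t • h)) =ᶠ[𝓝 0] fun t ↦ fderiv ℝ f (q + t • h) h := by
    filter_upwards [hline_tendsto.eventually (hf.eventually (by simp))] with t ht
    exact ((ht.differentiableAt (by simp)).hasFDerivAt.comp_hasDerivAt t (hline t)).deriv
  have hf' : HasFDerivAt (fderiv ℝ f) (fderiv ℝ (fderiv ℝ f) q) (q + (0 : ℝ) • h) := by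
    simpa using ((hf.fderiv_right (m := 1) (by norm_num)).differentiableAt (by simp)).hasFDerivAt
  have hderiv₂ : HasDerivAt (fun t : ℝ ↦ fderiv ℝ f (q + t • h) h)
      (fderiv ℝ (fderiv ℝ f) q h h) 0 := by
    have h₂ := hf'.comp_hasDerivAt (0 : ℝ) (hline 0)
    simpa using h₂.clm_apply (hasDerivAt_const (0 : ℝ) h)
  rw [hderiv.deriv_eq, hderiv₂.deriv]

lemma fderiv_fderiv_apply_self_nonpos_of_isLocalMax {f : G → ℝ} {q : G} (hmax : IsLocalMax f q)
    (hf : ContDiffAt ℝ 2 f q) (h : G) : fderiv ℝ (fderiv ℝ f) q h h ≤ 0 := by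
  have hline : Continuous fun t : ℝ ↦ q + t • h := by fun_prop
  rw [← deriv_deriv_comp_line hf]
  refine deriv_deriv_nonpos_of_isLocalMax
    (IsLocalMax.comp_continuous (b := (0 : ℝ)) (by simpa using hmax) hline.continuousAt) ?_
  exact ContinuousAt.comp (by simpa using hf.continuousAt) hline.continuousAt

end SecondOrder

section LinearAlgebra

lemma isInvertible_of_apply_self_ne_zero {V : Type*} [NormedAddCommGroup V] [NormedSpace ℝ V]
    [FiniteDimensional ℝ V] {B : V →L[ℝ] V →L[ℝ] ℝ} (hB : ∀ v ≠ 0, B v v ≠ 0) :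
    B.IsInvertible := by
  have hinj : Function.Injective B := by
    refine (injective_iff_map_eq_zero B).mpr fun v hv ↦ by_contra fun hv0 ↦ hB v hv0 ?_
    simp [hv]
  have hfinrank : finrank ℝ V = finrank ℝ (V →L[ℝ] ℝ) := by
    rw [← (LinearMap.toContinuousLinearMap (𝕜 := ℝ) (E := V) (F' := ℝ)).finrank_eq]
    exact Subspace.dual_finrank_eq.symm
  let e := LinearEquiv.ofInjectiveOfFinrankEq (B : V →ₗ[ℝ] V →L[ℝ] ℝ) hinj hfinrank
  exact ⟨e.toContinuousLinearEquiv, rfl⟩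

lemma exists_smul_eq_of_forall_inner_eq_zero {V E : Type*} [NormedAddCommGroup E]
    [InnerProductSpace ℝ E] [FiniteDimensional ℝ E] [AddCommGroup V] [Module ℝ V]
    (hdim : finrank ℝ E = finrank ℝ V + 1)
    {A : V →ₗ[ℝ] E} (hA : Function.Injective A) {m u : E} (hm : m ≠ 0)
    (hmA : ∀ h, ⟪m, A h⟫_ℝ = 0) (huA : ∀ h, ⟪u, A h⟫_ℝ = 0) : ∃ a : ℝ, a • m = u := by
  have hfinrank : finrank ℝ A.rangeᗮ = 1 := by
    have := A.range.finrank_add_finrank_orthogonal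
    rw [LinearMap.finrank_range_of_inj hA] at this
    lia
  have mem_orthogonal {v : E} (hv : ∀ h, ⟪v, A h⟫_ℝ = 0) : v ∈ A.rangeᗮ := by
    simpa [Submodule.mem_orthogonal'] using hv
  obtain ⟨a, ha⟩ := (finrank_eq_one_iff_of_nonzero' (⟨m, mem_orthogonal hmA⟩ : A.rangeᗮ)
    (by simpa using hm)).mp hfinrank ⟨u, mem_orthogonal huA⟩
  exact ⟨a, congrArg Subtype.val ha⟩

end LinearAlgebra

section FootPoint

variable {E G : Type*} [NormedAddCommGroup E] [InnerProductSpace ℝ E]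
  [NormedAddCommGroup G] [NormedSpace ℝ G] {σ : G → E} {x : E} {q : G}

/-- Minus the `v`-derivative of `½‖y - σ v‖²` as a function of `(y, v)`. It vanishes exactly when
`y - σ v` is normal to the patch `σ` at `σ v`, that is, when `σ v` is a critical foot point
of `y`. -/
noncomputable def footPointMap (σ : G → E) (z : E × G) : G →L[ℝ] ℝ :=
  innerSL ℝ (z.1 - σ z.2) ∘L fderiv ℝ σ z.2

lemma contDiffAt_footPointMap {n : ℕ∞ω} (hσ : ContDiffAt ℝ (n + 1) σ q) :
    ContDiffAt ℝ n (footPointMap σ) (x, q) := by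
  have hσ₁ : ContDiffAt ℝ n σ q := hσ.of_le le_self_add
  have hσ' : ContDiffAt ℝ n (fderiv ℝ σ) q := hσ.fderiv_right le_rfl
  exact ((innerSL ℝ).contDiff.contDiffAt.comp (x, q)
    (contDiffAt_fst.sub (hσ₁.comp (x, q) contDiffAt_snd))).clm_comp
      (hσ'.comp (x, q) contDiffAt_snd)

lemma fderiv_footPointMap_apply_self (hσ : ContDiffAt ℝ 2 σ q) (h : G) :
    fderiv ℝ (footPointMap σ) (x, q) (0, h) h =
      ⟪x - σ q, fderiv ℝ (fderiv ℝ σ) q h h⟫_ℝ - ‖fderiv ℝ σ q h‖ ^ 2 := by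
  have hσ₁ : HasFDerivAt σ (fderiv ℝ σ q) q := (hσ.differentiableAt (by simp)).hasFDerivAt
  have hσ₂ : HasFDerivAt (fderiv ℝ σ) (fderiv ℝ (fderiv ℝ σ) q) q :=
    ((hσ.fderiv_right (m := 1) (by norm_num)).differentiableAt (by simp)).hasFDerivAt
  have hnormal := (innerSL ℝ (E := E)).hasFDerivAt.comp (x, q)
    (hasFDerivAt_fst.sub (hσ₁.comp (x, q) hasFDerivAt_snd))
  have hfoot : HasFDerivAt (footPointMap σ) _ (x, q) :=
    hnormal.clm_comp (hσ₂.comp (x, q) hasFDerivAt_snd)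
  rw [hfoot.fderiv]
  change ⟪x - σ q, fderiv ℝ (fderiv ℝ σ) q h h⟫_ℝ + ⟪0 - fderiv ℝ σ q h, fderiv ℝ σ q h⟫_ℝ = _
  rw [zero_sub, inner_neg_left, real_inner_self_eq_norm_sq, ← sub_eq_add_neg]

lemma inner_fderiv_fderiv_nonpos_of_mem_normalCone {K : Set E} {m : E} (hσ : ContDiffAt ℝ 2 σ q)
    (hmem : ∀ᶠ v in 𝓝 q, σ v ∈ K) (hm : m ∈ normalCone K (σ q)) (h : G) :
    ⟪m, fderiv ℝ (fderiv ℝ σ) q h h⟫_ℝ ≤ 0 := by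
  have hcomp : fderiv ℝ (fderiv ℝ (innerSL ℝ m ∘ σ)) q h h =
      ⟪m, fderiv ℝ (fderiv ℝ σ) q h h⟫_ℝ := by
    simpa [iteratedFDeriv_two_apply] using DFunLike.congr_fun
      ((innerSL ℝ m).iteratedFDeriv_comp_left hσ (i := 2) le_rfl) ![h, h]
  exact hcomp ▸ fderiv_fderiv_apply_self_nonpos_of_isLocalMax
    (isLocalMax_inner_of_mem_normalCone hmem hm) ((innerSL ℝ m).contDiff.contDiffAt.comp q hσ) h

/-- Because `x - σ q` is an outward normal, the second-order term of the partial derivative of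
`footPointMap` is nonpositive; subtracting the first fundamental form makes it negative definite,
so the implicit function theorem applies. -/
lemma exists_contDiffAt_footPoint [CompleteSpace E] [FiniteDimensional ℝ G] {K : Set E} {n : ℕ∞ω}
    (hn : n ≠ 0) (hσ : ContDiffAt ℝ (n + 1) σ q) (hinj : Function.Injective (fderiv ℝ σ q))
    (hmem : ∀ᶠ v in 𝓝 q, σ v ∈ K) (hx : x - σ q ∈ normalCone K (σ q)) :
    ∃ ψ : E → G, ContDiffAt ℝ n ψ x ∧ ψ x = q ∧ ∀ᶠ y in 𝓝 x, footPointMap σ (y, ψ y) = 0 := by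
  have := FiniteDimensional.complete ℝ G
  have hn₁ : 1 ≤ n := ENat.one_le_iff_ne_zero_withTop.mpr hn
  have hσ₂ : ContDiffAt ℝ 2 σ q := hσ.of_le (one_add_one_eq_two (R := ℕ∞ω) ▸ by gcongr)
  have hinv : (fderiv ℝ (footPointMap σ) (x, q) ∘L .inr ℝ E G).IsInvertible := by
    refine isInvertible_of_apply_self_ne_zero fun h hh ↦ ne_of_lt ?_
    have hnonpos := inner_fderiv_fderiv_nonpos_of_mem_normalCone hσ₂ hmem hx h
    have hpos : 0 < ‖fderiv ℝ σ q h‖ ^ 2 := by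
      have := (map_ne_zero_iff _ hinj).mpr hh
      positivity
    calc fderiv ℝ (footPointMap σ) (x, q) (0, h) h
        = ⟪x - σ q, fderiv ℝ (fderiv ℝ σ) q h h⟫_ℝ - ‖fderiv ℝ σ q h‖ ^ 2 :=
          fderiv_footPointMap_apply_self hσ₂ h
      _ < 0 := by linarith
  have hfoot : ContDiffAt ℝ n (footPointMap σ) (x, q) := contDiffAt_footPointMap hσ
  have hzero : footPointMap σ (x, q) = 0 := ContinuousLinearMap.ext <|
    inner_fderiv_eq_zero_of_mem_normalCone (hσ₂.differentiableAt (by simp)) hmem hx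
  refine ⟨hfoot.implicitFunction hn hinv, hfoot.contDiffAt_implicitFunction hn hinv,
    hfoot.implicitFunction_apply_self hn hinv, ?_⟩
  simpa only [hzero] using hfoot.eventually_apply_implicitFunction hn hinv

end FootPoint

section ImmersedPatch

variable {E G : Type*} [NormedAddCommGroup E] [NormedSpace ℝ E]
  [NormedAddCommGroup G] [NormedSpace ℝ G] {σ : G → E} {q : G} {S : Set E} {n : ℕ∞ω}

/-- Near `q`, the map `σ` is a `C^n` parametrization, immersive at `q`, of a piece of `S`. -/
structure IsImmersedPatch (n : ℕ∞ω) (S : Set E) (σ : G → E) (q : G) : Prop where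
  contDiffAt : ContDiffAt ℝ n σ q
  injective_fderiv : Function.Injective (fderiv ℝ σ q)
  eventually_mem : ∀ᶠ v in 𝓝 q, σ v ∈ S

namespace IsImmersedPatch

lemma of_isOpen {U : Set G} (hU : IsOpen U) (hσ : ContDiffOn ℝ n σ U)
    (hinj : Function.Injective (fderivWithin ℝ σ U q)) (hUS : σ '' U ⊆ S) (hq : q ∈ U) :
    IsImmersedPatch n S σ q where
  contDiffAt := hσ.contDiffAt (hU.mem_nhds hq)
  injective_fderiv := fderivWithin_of_isOpen (𝕜 := ℝ) (f := σ) hU hq ▸ hinj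
  eventually_mem := mem_of_superset (hU.mem_nhds hq) (image_subset_iff.mp hUS)

lemma mono {T : Set E} (h : IsImmersedPatch n S σ q) (hST : S ⊆ T) : IsImmersedPatch n T σ q :=
  { h with eventually_mem := h.eventually_mem.mono fun _ hv ↦ hST hv }

lemma of_le {m : ℕ∞ω} (h : IsImmersedPatch n S σ q) (hmn : m ≤ n) : IsImmersedPatch m S σ q :=
  { h with contDiffAt := h.contDiffAt.of_le hmn }

protected lemma finiteDimensional [FiniteDimensional ℝ E] (h : IsImmersedPatch n S σ q) :
    FiniteDimensional ℝ G :=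
  .of_injective (fderiv ℝ σ q : G →ₗ[ℝ] E) h.injective_fderiv

protected lemma eventually [FiniteDimensional ℝ G] (h : IsImmersedPatch 1 S σ q) :
    ∀ᶠ v in 𝓝 q, IsImmersedPatch 1 S σ v := by
  have hinj : ∀ᶠ v in 𝓝 q, Function.Injective (fderiv ℝ σ v) :=
    (h.contDiffAt.fderiv_right (m := 0) (by simp)).continuousAt.eventually
      (ContinuousLinearMap.isOpen_injective.mem_nhds h.injective_fderiv)
  filter_upwards [h.contDiffAt.eventually (by simp), hinj, h.eventually_mem.eventually_nhds]
    with v hv hv' hv''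
  exact ⟨hv, hv', hv''⟩

end IsImmersedPatch

end ImmersedPatch

section Regularity

variable {E G : Type*} [NormedAddCommGroup E] [InnerProductSpace ℝ E] [FiniteDimensional ℝ E]
  [NormedAddCommGroup G] [NormedSpace ℝ G] {K : Set E} {P : E → E} {σ : G → E} {q : G}
  {m x : E} {n : ℕ∞ω}

lemma IsImmersedPatch.exists_smul_eq_sub (hdim : finrank ℝ E = finrank ℝ G + 1)
    (hσ : IsImmersedPatch 1 K σ q) (hm0 : m ≠ 0) (hm : m ∈ normalCone K (σ q))
    (hfoot : footPointMap σ (x, q) = 0) : ∃ a : ℝ, a • m = x - σ q :=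
  exists_smul_eq_of_forall_inner_eq_zero (A := (fderiv ℝ σ q : G →ₗ[ℝ] E)) hdim
    hσ.injective_fderiv hm0
    (inner_fderiv_eq_zero_of_mem_normalCone (hσ.contDiffAt.differentiableAt (by simp))
      hσ.eventually_mem hm)
    (DFunLike.congr_fun hfoot)

/-- The foot points of points close to `x` stay nearest points because the hyperplane orthogonal to
`y - σ (ψ y)` supports `K`, up to a sign. The sign is preserved by continuity unless `K` lies in the
hyperplane through `σ (ψ x)` orthogonal to `x - σ (ψ x)`; in that case both signs give normals. -/
lemma eventually_sub_mem_normalCone (hK : Convex ℝ K) (hdim : finrank ℝ E = finrank ℝ G + 1)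
    (hKclosed : IsClosed K) {ψ : E → G} (hψ : ContinuousAt ψ x)
    (hσ : IsImmersedPatch 1 (frontier K) σ (ψ x)) (hne : x ≠ σ (ψ x))
    (hx : x - σ (ψ x) ∈ normalCone K (σ (ψ x)))
    (hfoot : ∀ᶠ y in 𝓝 x, footPointMap σ (y, ψ y) = 0) :
    ∀ᶠ y in 𝓝 x, y - σ (ψ y) ∈ normalCone K (σ (ψ y)) := by
  have := hσ.finiteDimensional
  have hpatch : ∀ᶠ y in 𝓝 x, IsImmersedPatch 1 (frontier K) σ (ψ y) := hψ.eventually hσ.eventually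
  by_cases hneg : ∃ z ∈ K, ⟪x - σ (ψ x), z - σ (ψ x)⟫_ℝ < 0
  · obtain ⟨z, hzK, hz⟩ := hneg
    have hσψ : ContinuousAt (fun y ↦ σ (ψ y)) x :=
      ContinuousAt.comp hσ.contDiffAt.continuousAt hψ
    have hneg' : ∀ᶠ y in 𝓝 x, ⟪y - σ (ψ y), z - σ (ψ y)⟫_ℝ < 0 :=
      ((continuousAt_id.sub hσψ).inner (continuousAt_const.sub hσψ)).eventually (gt_mem_nhds hz)
    filter_upwards [hpatch, hneg', hfoot] with y hy hyz hyfoot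
    have hyfr := hy.eventually_mem.self_of_nhds
    obtain ⟨m, hm0, hm⟩ :=
      exists_ne_zero_mem_normalCone hK (hKclosed.frontier_subset hyfr) hyfr.2
    obtain ⟨a, ha⟩ := (hy.mono hKclosed.frontier_subset).exists_smul_eq_sub hdim hm0 hm hyfoot
    exact ha ▸ smul_mem_normalCone_of_inner_neg hm hzK (ha ▸ hyz)
  · push Not at hneg
    have hplane (w) (hw : w ∈ K) : ⟪x - σ (ψ x), w - σ (ψ x)⟫_ℝ = 0 :=
      le_antisymm (hx w hw) (hneg w hw)
    filter_upwards [hpatch, hfoot] with y hy hyfoot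
    have hyK := hKclosed.frontier_subset hy.eventually_mem.self_of_nhds
    have hplane' (w) (hw : w ∈ K) : ⟪x - σ (ψ x), w - σ (ψ y)⟫_ℝ = 0 := by
      rw [← sub_sub_sub_cancel_right w _ (σ (ψ x)), inner_sub_right, hplane w hw, hplane _ hyK,
        sub_zero]
    obtain ⟨a, ha⟩ := (hy.mono hKclosed.frontier_subset).exists_smul_eq_sub hdim
      (sub_ne_zero.mpr hne) (fun w hw ↦ (hplane' w hw).le) hyfoot
    intro w hw
    rw [← ha, real_inner_smul_left, hplane' w hw, mul_zero]

theorem IsMetricProjection.contDiffAt (hP : IsMetricProjection K P) (hK : Convex ℝ K)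
    (hdim : finrank ℝ E = finrank ℝ G + 1) (hx : x ∉ K) (hn : n ≠ 0)
    (hσ : IsImmersedPatch (n + 1) (frontier K) σ q) (hq : σ q = P x) : ContDiffAt ℝ n P x := by
  have := FiniteDimensional.complete ℝ E
  have := hσ.finiteDimensional
  have hfrontier : frontier K ⊆ K := hP.isClosed.frontier_subset
  have hnormal : x - σ q ∈ normalCone K (σ q) := hq ▸ hP.sub_mem_normalCone hK x
  obtain ⟨ψ, hψ, rfl, hfoot⟩ := exists_contDiffAt_footPoint hn hσ.contDiffAt hσ.injective_fderiv
    (hσ.mono hfrontier).eventually_mem hnormal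
  have hσ₁ : IsImmersedPatch 1 (frontier K) σ (ψ x) := hσ.of_le le_add_self
  have hne : x ≠ σ (ψ x) := fun h ↦ hx (h ▸ hq ▸ (hP x).1)
  have hPψ : P =ᶠ[𝓝 x] σ ∘ ψ := by
    filter_upwards [eventually_sub_mem_normalCone hK hdim hP.isClosed hψ.continuousAt hσ₁ hne
      hnormal hfoot, hψ.continuousAt.eventually hσ₁.eventually_mem] with y hy hyfr
    exact hP.eq_of_sub_mem_normalCone hK (hfrontier hyfr) hy
  exact ((hσ.contDiffAt.of_le le_self_add).comp x hψ).congr_of_eventuallyEq hPψ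

end Regularity

theorem projection_one_sided_deriv_exists_of_C2_boundary_general {E G : Type*}
    [NormedAddCommGroup E] [InnerProductSpace ℝ E] [FiniteDimensional ℝ E]
    [NormedAddCommGroup G] [NormedSpace ℝ G]
    (hdim : finrank ℝ E = finrank ℝ G + 1) {K : Set E} (hK : Convex ℝ K) {P : E → E}
    (hP : IsMetricProjection K P) {c : ℝ → E} (hc : DifferentiableWithinAt ℝ c (Ioi 0) 0)
    (hout : c 0 ∉ K) {σ : G → E} {q : G} (hσ : IsImmersedPatch 2 (frontier K) σ q)
    (hq : σ q = P (c 0)) :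
    ∃ L : E, Tendsto (fun t : ℝ ↦ t⁻¹ • (P (c t) - P (c 0))) (𝓝[>] 0) (𝓝 L) := by
  have hPc : ContDiffAt ℝ 1 P (c 0) :=
    hP.contDiffAt hK hdim hout one_ne_zero (one_add_one_eq_two (R := ℕ∞ω) ▸ hσ) hq
  have hderiv := ((hPc.differentiableAt one_ne_zero).comp_differentiableWithinAt 0
    hc).hasDerivWithinAt
  exact ⟨_, by simpa [slope_fun_def] using
    (hasDerivWithinAt_iff_tendsto_slope' self_notMem_Ioi).mp hderiv⟩

/-- If `K ⊂ ℝ³` is a compact convex body whose boundary is a `C²` surface (locally the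
image of a `C²` immersed injective parametrization), `Π` is the metric projection onto
`K`, and `c` is a differentiable curve staying outside `K`, then the one-sided derivative
`lim_{t→0⁺} (Π(c(t)) − Π(c(0)))/t` exists. -/
theorem projection_one_sided_deriv_exists_of_C2_boundary
    (K : Set (EuclideanSpace ℝ (Fin 3)))
    (hKcomp : IsCompact K) (hKconv : Convex ℝ K) (hKint : (interior K).Nonempty)
    (hsurf : ∀ p ∈ frontier K,
      ∃ (U : Set (ℝ × ℝ)) (σ : ℝ × ℝ → EuclideanSpace ℝ (Fin 3)),
        IsOpen U ∧ ContDiffOn ℝ 2 σ U ∧ Set.InjOn σ U ∧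
        (∀ q ∈ U, Function.Injective (fderivWithin ℝ σ U q)) ∧
        σ '' U ⊆ frontier K ∧ σ '' U ∈ nhdsWithin p (frontier K))
    (P : EuclideanSpace ℝ (Fin 3) → EuclideanSpace ℝ (Fin 3))
    (hP : ∀ y, P y ∈ K ∧ dist y (P y) = Metric.infDist y K)
    (c : ℝ → EuclideanSpace ℝ (Fin 3))
    (hc : Differentiable ℝ c) (hout : ∀ t, c t ∉ K) :
    ∃ L : EuclideanSpace ℝ (Fin 3),
      Filter.Tendsto (fun t : ℝ => t⁻¹ • (P (c t) - P (c 0)))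
        (nhdsWithin 0 (Set.Ioi 0)) (nhds L) := by
  have hfrontier : P (c 0) ∈ frontier K := IsMetricProjection.mem_frontier hP hKconv (hout 0)
  obtain ⟨U, σ, hU, hσ, -, hinj, hsub, hnhds⟩ := hsurf _ hfrontier
  obtain ⟨q, hqU, hq⟩ := mem_of_mem_nhdsWithin hfrontier hnhds
  exact projection_one_sided_deriv_exists_of_C2_boundary_general (by simp) hKconv hP
    (hc 0).differentiableWithinAt (hout 0) (.of_isOpen hU hσ (hinj q hqU) hsub hqU) hq
end
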